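/- arXiv:1811.02822 — 6 statements merged into one kernel-verified Lean document; each statement's English description precedes it below -/
import Mathlib

section
/- Proposition 1 (validity of the CRIT_1 lower bound): Let x* be an optimal leader strategy for BKP with optimal value z* = f(x*). If ∑_{i : x*_i = 0} w_i > C_l, so that x* has a critical item c, then z(CRIT_1(c)) ≤ z*. -/
open Finset

/-- A 0/1 vector. -/
def Binary {n : ℕ} (x : Fin n → ℤ) : Prop :=
  ∀ i, x i = 0 ∨ x i = 1

/-- The set of follower objective values attainable against a leader strategy `x`. -/
def followerValues {n : ℕ} (p w : Fin n → ℤ) (Cl : ℤ) (x : Fin n → ℤ) : Set ℤ :=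
  {s | ∃ y : Fin n → ℤ, Binary y ∧ (∀ i, y i ≤ 1 - x i) ∧
    (∑ i, w i * y i) ≤ Cl ∧ s = ∑ i, p i * y i}

/-- `c` is the critical item of the leader strategy `x`. -/
def IsCritical {n : ℕ} (w : Fin n → ℤ) (Cl : ℤ) (x : Fin n → ℤ) (c : Fin n) : Prop :=
  x c = 0 ∧
  (∑ i ∈ univ.filter (fun i => i < c ∧ x i = 0), w i) < Cl ∧
  Cl ≤ ∑ i ∈ univ.filter (fun i => i ≤ c ∧ x i = 0), w i

/-- Weight of the split solution of `x` with critical item `c`. -/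
def splitWeight {n : ℕ} (w : Fin n → ℤ) (c : Fin n) (x : Fin n → ℤ) : ℤ :=
  ∑ i ∈ univ.filter (fun i => i < c), w i * (1 - x i)

/-- Profit of the split solution of `x` with critical item `c`. -/
def splitProfit {n : ℕ} (p : Fin n → ℤ) (c : Fin n) (x : Fin n → ℤ) : ℤ :=
  ∑ i ∈ univ.filter (fun i => i < c), p i * (1 - x i)

/-- Objective values of the feasible solutions of model `CRIT₁(c)`. -/
def crit1Values {n : ℕ} (p w v : Fin n → ℤ) (Cu Cl : ℤ) (c : Fin n) : Set ℤ :=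
  {s | ∃ x : Fin n → ℤ, Binary x ∧ (∑ i, v i * x i) ≤ Cu ∧ x c = 0 ∧
    1 ≤ Cl - splitWeight w c x ∧ Cl - splitWeight w c x ≤ w c ∧
    s = splitProfit p c x}

/-- Profit change `p^τ` of a tuple `τ` w.r.t. critical item `c`. -/
def pT {n : ℕ} (p : Fin n → ℤ) (c : Fin n) (τ : Finset (Fin n)) : ℤ :=
  (∑ j ∈ τ.filter (fun j => c ≤ j), p j) - ∑ i ∈ τ.filter (fun i => i < c), p i

/-- Weight change `w^τ` of a tuple `τ` w.r.t. critical item `c`. -/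
def wT {n : ℕ} (w : Fin n → ℤ) (c : Fin n) (τ : Finset (Fin n)) : ℤ :=
  (∑ j ∈ τ.filter (fun j => c ≤ j), w j) - ∑ i ∈ τ.filter (fun i => i < c), w i

/-- Objective values of the feasible solutions of model `CRIT₂(c, T)`. -/
def crit2Values {n : ℕ} (p w v : Fin n → ℤ) (Cu Cl : ℤ) (c : Fin n)
    (T : Finset (Finset (Fin n))) : Set ℤ :=
  {s | ∃ x : Fin n → ℤ, Binary x ∧ (∑ i, v i * x i) ≤ Cu ∧ x c = 0 ∧
    1 ≤ Cl - splitWeight w c x ∧ Cl - splitWeight w c x ≤ w c ∧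
    s = splitProfit p c x +
      (T.filter (fun τ => (∀ i ∈ τ, x i = 0) ∧ wT w c τ ≤ Cl - splitWeight w c x)).fold
        max 0 (pT p c)}

/-- **Proposition 1.** If the optimal leader strategy `xstar` (with optimal value
`z* = f xstar`) induces a critical item `c`, then `z(CRIT₁(c)) ≤ z*`. -/
theorem crit1_lower_bound
    (n : ℕ) (p w v : Fin n → ℤ) (Cu Cl : ℤ)
    (hp : ∀ i, 0 < p i) (hw : ∀ i, 0 < w i) (hv : ∀ i, 0 < v i)
    (hsort : ∀ i j : Fin n, i ≤ j → p j * w i ≤ p i * w j)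
    (f : (Fin n → ℤ) → ℤ)
    (hf : ∀ x, Binary x → IsGreatest (followerValues p w Cl x) (f x))
    (xstar : Fin n → ℤ) (hxb : Binary xstar)
    (hxfeas : (∑ i, v i * xstar i) ≤ Cu)
    (hxopt : ∀ x, Binary x → (∑ i, v i * x i) ≤ Cu → f xstar ≤ f x)
    (hcw : Cl < ∑ i ∈ univ.filter (fun i => xstar i = 0), w i)
    (c : Fin n) (hc : IsCritical w Cl xstar c)
    (z1 : ℤ) (hz1 : IsLeast (crit1Values p w v Cu Cl c) z1) :
    z1 ≤ f xstar := by
  obtain ⟨hxc, h1, h2⟩ := hc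
  have key : ∀ g : Fin n → ℤ, ∑ i ∈ univ.filter (fun i => i < c), g i * (1 - xstar i)
      = ∑ i ∈ univ.filter (fun i => i < c ∧ xstar i = 0), g i := by
    intro g
    rw [← Finset.filter_filter, Finset.sum_filter (fun i => xstar i = 0)]
    refine Finset.sum_congr rfl fun i _ => ?_
    rcases hxb i with h | h <;> simp [h]
  have hs : splitWeight w c xstar
      = ∑ i ∈ univ.filter (fun i => i < c ∧ xstar i = 0), w i := key w
  have hins : univ.filter (fun i => i ≤ c ∧ xstar i = 0)
      = insert c (univ.filter (fun i => i < c ∧ xstar i = 0)) := by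
    ext i
    simp only [mem_filter, mem_univ, true_and, mem_insert, le_iff_lt_or_eq]
    constructor
    · rintro ⟨h | h, h'⟩
      · exact Or.inr ⟨h, h'⟩
      · exact Or.inl h
    · rintro (h | ⟨h, h'⟩)
      · exact ⟨Or.inr h, h ▸ hxc⟩
      · exact ⟨Or.inl h, h'⟩
  rw [hins, Finset.sum_insert (by simp)] at h2
  have hz : z1 ≤ splitProfit p c xstar :=
    hz1.2 ⟨xstar, hxb, hxfeas, hxc, by omega, by omega, rfl⟩
  refine hz.trans ((hf xstar hxb).2 ?_)
  have conv : ∀ g : Fin n → ℤ, ∑ i, g i * (if i < c then 1 - xstar i else 0)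
      = ∑ i ∈ univ.filter (fun i => i < c), g i * (1 - xstar i) := by
    intro g
    rw [Finset.sum_filter]
    refine Finset.sum_congr rfl fun i _ => ?_
    split_ifs <;> simp
  refine ⟨fun i => if i < c then 1 - xstar i else 0, ?_, ?_, ?_, ?_⟩
  · intro i
    dsimp only
    rcases hxb i with h | h <;> split_ifs <;> simp [h]
  · intro i
    dsimp only
    rcases hxb i with h | h <;> split_ifs <;> simp [h]
  · rw [conv w, key w]
    exact h1.le
  · rw [conv p]
    rfl
end

section
/- Proposition 2 (validity of the CRIT_2 lower bound): Let x* be an optimal leader strategy for BKP with optimal value z* = f(x*), and suppose ∑_{i : x*_i = 0} w_i > C_l, so that x* has a critical item c. Then for every finite family T of subsets of {1,...,n}, z(CRIT_2(c,T)) ≤ z*. -/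
open Finset

theorem aux_sum {n : ℕ} (g : Fin n → ℤ) (c : Fin n) (x : Fin n → ℤ) (τ : Finset (Fin n))
    (hτ : ∀ i ∈ τ, x i = 0) :
    ∑ i, g i * (if i < c then (if i ∈ τ then 0 else 1 - x i) else (if i ∈ τ then 1 else 0))
      = splitProfit g c x + pT g c τ := by
  have e1 : ∀ q : Fin n → Prop, ∀ [DecidablePred q], ∑ j ∈ τ.filter q, g j
      = ∑ j, if j ∈ τ ∧ q j then g j else 0 := by
    intro q _
    rw [← Finset.sum_filter]
    congr 1
    ext j
    simp
  unfold splitProfit pT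
  rw [e1, e1, Finset.sum_filter, ← Finset.sum_sub_distrib, ← Finset.sum_add_distrib]
  refine Finset.sum_congr rfl fun i _ => ?_
  by_cases h1 : i < c <;> by_cases h2 : i ∈ τ
  · simp [h1, h2, hτ i h2]
  · simp [h1, h2]
  · simp [h1, h2, not_lt.mp h1]
  · simp [h1, h2]

theorem aux_le {n : ℕ} (p w : Fin n → ℤ) (Cl : ℤ) (c : Fin n) (x : Fin n → ℤ) (hx : Binary x)
    (F : ℤ) (hF : IsGreatest (followerValues p w Cl x) F) (τ : Finset (Fin n))
    (hτ : ∀ i ∈ τ, x i = 0) (hw : wT w c τ ≤ Cl - splitWeight w c x) :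
    splitProfit p c x + pT p c τ ≤ F := by
  apply hF.2
  refine ⟨fun i => if i < c then (if i ∈ τ then 0 else 1 - x i) else (if i ∈ τ then 1 else 0),
    ?_, ?_, ?_, (aux_sum p c x τ hτ).symm⟩
  · intro i
    have := hx i
    dsimp only
    split_ifs <;> omega
  · intro i
    have := hx i
    have := hτ i
    dsimp only
    split_ifs with h1 h2 h2
    · omega
    · omega
    · have := hτ i h2
      omega
    · omega
  · have := aux_sum w c x τ hτ
    have e : wT w c τ = pT w c τ := rfl
    have e' : splitWeight w c x = splitProfit w c x := rfl
    rw [this]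
    omega

/-- **Proposition 2.** If the optimal leader strategy `xstar` (with optimal value
`z* = f xstar`) induces a critical item `c`, then for every finite family `T` of subsets
of the items, `z(CRIT₂(c, T)) ≤ z*`. -/
theorem crit2_lower_bound
    (n : ℕ) (p w v : Fin n → ℤ) (Cu Cl : ℤ)
    (hp : ∀ i, 0 < p i) (hw : ∀ i, 0 < w i) (hv : ∀ i, 0 < v i)
    (hsort : ∀ i j : Fin n, i ≤ j → p j * w i ≤ p i * w j)
    (f : (Fin n → ℤ) → ℤ)
    (hf : ∀ x, Binary x → IsGreatest (followerValues p w Cl x) (f x))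
    (xstar : Fin n → ℤ) (hxb : Binary xstar)
    (hxfeas : (∑ i, v i * xstar i) ≤ Cu)
    (hxopt : ∀ x, Binary x → (∑ i, v i * x i) ≤ Cu → f xstar ≤ f x)
    (hcw : Cl < ∑ i ∈ univ.filter (fun i => xstar i = 0), w i)
    (c : Fin n) (hc : IsCritical w Cl xstar c) :
    ∀ (T : Finset (Finset (Fin n))) (z2 : ℤ),
      IsLeast (crit2Values p w v Cu Cl c T) z2 → z2 ≤ f xstar := by
  intro T z2 hz
  obtain ⟨hc0, hc1, hc2⟩ := hc
  have hs : splitWeight w c xstar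
      = ∑ i ∈ univ.filter (fun i => i < c ∧ xstar i = 0), w i := by
    unfold splitWeight
    rw [Finset.sum_filter, Finset.sum_filter]
    refine Finset.sum_congr rfl fun i _ => ?_
    rcases hxb i with h | h <;> simp [h]
  have hs2 : ∑ i ∈ univ.filter (fun i => i ≤ c ∧ xstar i = 0), w i
      = w c + ∑ i ∈ univ.filter (fun i => i < c ∧ xstar i = 0), w i := by
    rw [← Finset.sum_insert (by simp)]
    congr 1
    ext i
    simp only [mem_filter, mem_univ, true_and, mem_insert, le_iff_eq_or_lt]
    constructor
    · rintro ⟨h | h, h'⟩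
      · exact Or.inl h
      · exact Or.inr ⟨h, h'⟩
    · rintro (h | ⟨h, h'⟩)
      · exact ⟨Or.inl h, h ▸ hc0⟩
      · exact ⟨Or.inr h, h'⟩
  refine (hz.2 ⟨xstar, hxb, hxfeas, hc0, by omega, by omega, rfl⟩).trans ?_
  have key := aux_le p w Cl c xstar hxb _ (hf xstar hxb)
  rw [← le_sub_iff_add_le', Finset.fold_max_le]
  constructor
  · have := key ∅ (by simp) (by simp only [wT, filter_empty, sum_empty]; omega)
    simp only [pT, filter_empty, sum_empty] at this
    omega
  · intro τ hτ
    have h := (Finset.mem_filter.mp hτ).2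
    have := key τ h.1 h.2
    omega
end

section
/- Tuple improvement lemma: Let x be a feasible leader strategy with ∑_{i : x_i = 0} w_i > C_l and critical item c, and let R(x) = C_l − ∑_{i < c} w_i (1 − x_i). Let τ ⊆ {1,...,n} be any set of items such that x_i = 0 for all i ∈ τ and w^τ ≤ R(x). Then the set ({i < c : x_i = 0} \ {i ∈ τ : i < c}) ∪ {j ∈ τ : j ≥ c} is a feasible follower solution, and consequently f(x) ≥ ∑_{i < c} p_i (1 − x_i) + p^τ. -/
open Finset

/-- The indicator vector of `({i < c : x i = 0} \ {i ∈ τ : i < c}) ∪ {j ∈ τ : j ≥ c}`. -/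
def tupleVec {n : ℕ} (x : Fin n → ℤ) (c : Fin n) (τ : Finset (Fin n)) : Fin n → ℤ :=
  fun i => if (i < c ∧ x i = 0 ∧ i ∉ τ) ∨ (c ≤ i ∧ i ∈ τ) then 1 else 0

theorem tupleVec_sum {n : ℕ} (q x : Fin n → ℤ) (hxb : Binary x) (c : Fin n)
    (τ : Finset (Fin n)) (hτ : ∀ i ∈ τ, x i = 0) :
    ∑ i, q i * tupleVec x c τ i = splitProfit q c x + pT q c τ := by
  have e : ∀ P : Fin n → Prop, ∀ [DecidablePred P],
      τ.filter P = univ.filter (fun i => i ∈ τ ∧ P i) := by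
    intro P _
    ext i
    simp
  unfold splitProfit pT
  rw [e, e]
  simp only [Finset.sum_filter]
  rw [← Finset.sum_sub_distrib, ← Finset.sum_add_distrib]
  refine Finset.sum_congr rfl fun i _ => ?_
  have h1 := hτ i
  unfold tupleVec
  by_cases hi : i ∈ τ <;> rcases lt_or_ge i c with h | h <;> rcases hxb i with h0 | h0 <;>
    simp_all [not_le.mpr, not_lt.mpr]

/-- **Tuple improvement lemma.** For a feasible leader strategy `x` with critical item
`c` and a tuple `τ` of non-interdicted items with `w^τ ≤ R(x)`, the solution obtained
from the split solution by removing the items of `τ` before `c` and adding the items of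
`τ` from `c` onwards is a feasible follower solution, hence
`f x ≥ ∑_{i<c} p i * (1 - x i) + p^τ`. -/
theorem tuple_improvement
    (n : ℕ) (p w v : Fin n → ℤ) (Cu Cl : ℤ)
    (hp : ∀ i, 0 < p i) (hw : ∀ i, 0 < w i) (hv : ∀ i, 0 < v i)
    (hsort : ∀ i j : Fin n, i ≤ j → p j * w i ≤ p i * w j)
    (x : Fin n → ℤ) (hxb : Binary x)
    (hxfeas : (∑ i, v i * x i) ≤ Cu)
    (hcw : Cl < ∑ i ∈ univ.filter (fun i => x i = 0), w i)
    (c : Fin n) (hc : IsCritical w Cl x c)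
    (τ : Finset (Fin n)) (hτ : ∀ i ∈ τ, x i = 0)
    (hwτ : wT w c τ ≤ Cl - splitWeight w c x)
    (fx : ℤ) (hfx : IsGreatest (followerValues p w Cl x) fx) :
    (Binary (tupleVec x c τ) ∧ (∀ i, tupleVec x c τ i ≤ 1 - x i) ∧
      (∑ i, w i * tupleVec x c τ i) ≤ Cl) ∧
    splitProfit p c x + pT p c τ ≤ fx := by
  have hB : Binary (tupleVec x c τ) := by
    intro i
    unfold tupleVec
    split_ifs <;> simp
  have hle : ∀ i, tupleVec x c τ i ≤ 1 - x i := by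
    intro i
    have h1 := hτ i
    unfold tupleVec
    split_ifs with h
    · rcases h with h | h
      · rw [h.2.1]; norm_num
      · rw [h1 h.2]; norm_num
    · rcases hxb i with h0 | h0 <;> rw [h0] <;> norm_num
  have hW : (∑ i, w i * tupleVec x c τ i) ≤ Cl := by
    have h := tupleVec_sum w x hxb c τ hτ
    have h2 : splitProfit w c x = splitWeight w c x := rfl
    have h3 : pT w c τ = wT w c τ := rfl
    linarith
  refine ⟨⟨hB, hle, hW⟩, ?_⟩
  rw [← tupleVec_sum p x hxb c τ hτ]
  exact hfx.2 ⟨_, hB, hle, hW, rfl⟩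
end

section
/- NCR is exact in the no-critical-item case: Suppose there exists an optimal leader strategy x* (feasible with f(x*) = z*) such that ∑_{i : x*_i = 0} w_i ≤ C_l. Then problem NCR is feasible and z* = z(NCR), where z(NCR) = min{∑_i p_i (1 − x_i) : x ∈ {0,1}^n, ∑_i v_i x_i ≤ C_u, ∑_i w_i (1 − x_i) ≤ C_l}. -/
open Finset

/-- Objective values of the feasible solutions of problem `NCR`. -/
def ncrValues {n : ℕ} (p w v : Fin n → ℤ) (Cu Cl : ℤ) : Set ℤ :=
  {s | ∃ x : Fin n → ℤ, Binary x ∧ (∑ i, v i * x i) ≤ Cu ∧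
    (∑ i, w i * (1 - x i)) ≤ Cl ∧ s = ∑ i, p i * (1 - x i)}

/-- **NCR is exact in the no-critical-item case.** If some optimal leader strategy
`xstar` (feasible with `f xstar = z*`) leaves non-interdicted items of total follower
weight at most `Cl`, then problem `NCR` is feasible and `z* = z(NCR)`. -/
theorem ncr_exact_no_critical_item
    (n : ℕ) (p w v : Fin n → ℤ) (Cu Cl : ℤ)
    (hp : ∀ i, 0 < p i) (hw : ∀ i, 0 < w i) (hv : ∀ i, 0 < v i)
    (f : (Fin n → ℤ) → ℤ)
    (hf : ∀ x, Binary x → IsGreatest (followerValues p w Cl x) (f x))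
    (xstar : Fin n → ℤ) (hxb : Binary xstar)
    (hxfeas : (∑ i, v i * xstar i) ≤ Cu)
    (hxopt : ∀ x, Binary x → (∑ i, v i * x i) ≤ Cu → f xstar ≤ f x)
    (hcw : (∑ i ∈ univ.filter (fun i => xstar i = 0), w i) ≤ Cl) :
    (ncrValues p w v Cu Cl).Nonempty ∧
    ∀ zN : ℤ, IsLeast (ncrValues p w v Cu Cl) zN → f xstar = zN := by
  have key : ∀ x, Binary x → (∑ i, w i * (1 - x i)) ≤ Cl → f x = ∑ i, p i * (1 - x i) := by
    intro x hx hwx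
    obtain ⟨⟨y, hy, hyx, hyw, hs⟩, hub⟩ := hf x hx
    apply le_antisymm
    · rw [hs]
      exact Finset.sum_le_sum fun i _ => mul_le_mul_of_nonneg_left (hyx i) (hp i).le
    · apply hub
      refine ⟨fun i => 1 - x i, fun i => ?_, fun i => le_refl _, hwx, rfl⟩
      rcases hx i with h | h <;> simp [h]
  have hws : (∑ i, w i * (1 - xstar i)) ≤ Cl := by
    rw [Finset.sum_filter] at hcw
    refine le_trans (le_of_eq (Finset.sum_congr rfl fun i _ => ?_)) hcw
    rcases hxb i with h | h <;> simp [h]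
  have hmem : f xstar ∈ ncrValues p w v Cu Cl :=
    ⟨xstar, hxb, hxfeas, hws, key xstar hxb hws⟩
  refine ⟨⟨_, hmem⟩, fun zN hz => le_antisymm ?_ (hz.2 hmem)⟩
  obtain ⟨x, hx, hxv, hxw, rfl⟩ := hz.1
  rw [← key x hx hxw]
  exact hxopt x hx hxv
end

section
/- Upper bound on the critical item index: Define z(LW) = max{∑_i w_i x_i : x ∈ {0,1}^n, ∑_i v_i x_i ≤ C_u}. Let j be an index with ∑_{i=1}^j w_i ≥ C_l + z(LW). Then for every feasible leader strategy x with ∑_{i : x_i = 0} w_i > C_l, the critical item c of x satisfies c ≤ j; in particular, no item with index larger than r = min{j : ∑_{i=1}^j w_i ≥ C_l + z(LW)} (when such j exists) can be critical. -/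
open Finset

/-- **Upper bound on the critical item index.** Let `zLW` be the optimal value of
problem `LW` (the maximum follower weight the leader can interdict), and let `j` be an
index with `∑_{i ≤ j} w i ≥ Cl + zLW`. Then for every feasible leader strategy `x` with
critical item `c`, one has `c ≤ j`; in particular no item with index larger than the
least such `j` can be critical. -/
theorem critical_item_upper_index
    (n : ℕ) (p w v : Fin n → ℤ) (Cu Cl : ℤ)
    (hp : ∀ i, 0 < p i) (hw : ∀ i, 0 < w i) (hv : ∀ i, 0 < v i)
    (hsort : ∀ i j : Fin n, i ≤ j → p j * w i ≤ p i * w j)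
    (zLW : ℤ)
    (hLW : IsGreatest
      {s : ℤ | ∃ x : Fin n → ℤ, Binary x ∧ (∑ i, v i * x i) ≤ Cu ∧ s = ∑ i, w i * x i}
      zLW)
    (j : Fin n) (hj : Cl + zLW ≤ ∑ i ∈ univ.filter (fun i => i ≤ j), w i) :
    ∀ x : Fin n → ℤ, Binary x → (∑ i, v i * x i) ≤ Cu →
      Cl < (∑ i ∈ univ.filter (fun i => x i = 0), w i) →
      ∀ c : Fin n, IsCritical w Cl x c → c ≤ j := by
  intro x hx hxu _ c hc
  by_contra hcj
  rw [not_le] at hcj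
  have hz : (∑ i, w i * x i) ≤ zLW := hLW.2 ⟨x, hx, hxu, rfl⟩
  have h2 := hc.2.1
  have key : (∑ i ∈ univ.filter (fun i => i ≤ j), w i) ≤
      (∑ i ∈ univ.filter (fun i => i < c ∧ x i = 0), w i) + ∑ i, w i * x i := by
    rw [Finset.sum_filter, Finset.sum_filter, ← Finset.sum_add_distrib]
    apply Finset.sum_le_sum
    intro i _
    have hwi := hw i
    by_cases hij : i ≤ j
    · have hic : i < c := lt_of_le_of_lt hij hcj
      rcases hx i with h | h <;> simp [h, hij, hic]
    · rcases hx i with h | h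
      · simp only [h, hij, if_false]
        split_ifs <;> simp [hwi.le]
      · simp [h, hij, hwi.le]
  linarith
end

section
/- Feasibility of the optimal leader strategy for CRIT_1: Let x be a feasible leader strategy with ∑_{i : x_i = 0} w_i > C_l and critical item c. Then x satisfies all constraints of model CRIT_1(c) (namely ∑_i v_i x_i ≤ C_u, x_c = 0 and 1 ≤ C_l − ∑_{i < c} w_i (1 − x_i) ≤ w_c), and consequently z(CRIT_1(c)) ≤ ∑_{i < c} p_i (1 − x_i). -/
open Finset

/-- **Feasibility of the leader strategy for CRIT₁.** A feasible leader strategy `x`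
with critical item `c` satisfies all constraints of model `CRIT₁(c)`, hence
`z(CRIT₁(c)) ≤ ∑_{i<c} p i * (1 - x i)`. -/
theorem leader_strategy_crit1_feasible
    (n : ℕ) (p w v : Fin n → ℤ) (Cu Cl : ℤ)
    (hp : ∀ i, 0 < p i) (hw : ∀ i, 0 < w i) (hv : ∀ i, 0 < v i)
    (hsort : ∀ i j : Fin n, i ≤ j → p j * w i ≤ p i * w j)
    (x : Fin n → ℤ) (hxb : Binary x)
    (hxfeas : (∑ i, v i * x i) ≤ Cu)
    (hcw : Cl < ∑ i ∈ univ.filter (fun i => x i = 0), w i)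
    (c : Fin n) (hc : IsCritical w Cl x c) :
    ((∑ i, v i * x i) ≤ Cu ∧ x c = 0 ∧
      1 ≤ Cl - splitWeight w c x ∧ Cl - splitWeight w c x ≤ w c) ∧
    ∀ z1 : ℤ, IsLeast (crit1Values p w v Cu Cl c) z1 → z1 ≤ splitProfit p c x := by
  obtain ⟨h0, h1, h2⟩ := hc
  have e1 : splitWeight w c x = ∑ i ∈ univ.filter (fun i => i < c ∧ x i = 0), w i := by
    unfold splitWeight
    rw [← Finset.filter_filter, Finset.sum_filter (fun i => x i = 0)]
    refine Finset.sum_congr rfl fun i _ => ?_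
    rcases hxb i with h | h <;> simp [h]
  have e2 : univ.filter (fun i => i ≤ c ∧ x i = 0)
      = insert c (univ.filter (fun i => i < c ∧ x i = 0)) := by
    ext i
    simp only [Finset.mem_filter, Finset.mem_univ, true_and, Finset.mem_insert]
    constructor
    · rintro ⟨h, h'⟩
      rcases h.eq_or_lt with h | h
      · exact Or.inl h
      · exact Or.inr ⟨h, h'⟩
    · rintro (rfl | ⟨h, h'⟩)
      · exact ⟨le_rfl, h0⟩
      · exact ⟨h.le, h'⟩
  rw [e2, Finset.sum_insert (by simp), ← e1] at h2
  rw [← e1] at h1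
  have a : 1 ≤ Cl - splitWeight w c x := by omega
  have b : Cl - splitWeight w c x ≤ w c := by omega
  exact ⟨⟨hxfeas, h0, a, b⟩, fun z1 hz => hz.2 ⟨x, hxb, hxfeas, h0, a, b, rfl⟩⟩
end
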